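/- arXiv:1807.11837 — 2 statements merged into one kernel-verified Lean document; each statement's English description precedes it below -/
import Mathlib

section
/- The maximum of the left-focal Green's function over its domain equals (b − a − 1)/(α − 1); that is, G_l(t, s) ≤ (b − a − 1)/(α − 1) for all a+1 ≤ t ≤ b and a+2 ≤ s ≤ b, and G_l(a+1, a+2) = (b − a − 1)/(α − 1). -/
/-- Rising factorial `rf x r = Γ(x+r)/Γ(x)`, with the convention `rf 0 r = 0`. -/
noncomputable def rf (x r : ℝ) : ℝ := if x = 0 then 0 else Real.Gamma (x + r) / Real.Gamma x

/-- The left-focal Green's function. -/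
noncomputable def Gl (a b : ℤ) (α : ℝ) (t s : ℤ) : ℝ :=
  if t ≤ s - 1 then
    (1 / Real.Gamma α) *
      (rf (b - s + 1 : ℝ) (α - 1) * rf (t - a : ℝ) (α - 2) / rf (b - a : ℝ) (α - 2))
  else
    (1 / Real.Gamma α) *
      (rf (b - s + 1 : ℝ) (α - 1) * rf (t - a : ℝ) (α - 2) / rf (b - a : ℝ) (α - 2) -
        rf (t - s + 1 : ℝ) (α - 1))

theorem rf_pos_aux (x r : ℝ) (hx : 0 < x) (hr : 0 < x + r) : 0 < rf x r := by
  unfold rf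
  rw [if_neg hx.ne']
  exact div_pos (Real.Gamma_pos_of_pos hr) (Real.Gamma_pos_of_pos hx)

theorem rf_step_aux (x r : ℝ) (hx : 0 < x) (hr : 0 < x + r) :
    rf (x + 1) r = rf x r * ((x + r) / x) := by
  unfold rf
  rw [if_neg hx.ne', if_neg (by positivity), show x + 1 + r = (x + r) + 1 by ring,
    Real.Gamma_add_one hr.ne', Real.Gamma_add_one hx.ne']
  have := (Real.Gamma_pos_of_pos hx).ne'
  field_simp

theorem rf_mono_aux (r : ℝ) (hr : 0 ≤ r) : Monotone (fun k : ℕ => rf ((k : ℝ) + 1) r) := by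
  apply monotone_nat_of_le_succ
  intro k
  have hx : (0 : ℝ) < (k : ℝ) + 1 := by positivity
  have hp := rf_pos_aux _ r hx (by positivity)
  push_cast
  rw [rf_step_aux _ r hx (by positivity)]
  apply le_mul_of_one_le_right hp.le
  rw [le_div_iff₀ hx]
  linarith

theorem rf_anti_aux (r : ℝ) (hr : r ≤ 0) (hr1 : -1 < r) :
    Antitone (fun k : ℕ => rf ((k : ℝ) + 1) r) := by
  apply antitone_nat_of_succ_le
  intro k
  have hk : (0 : ℝ) ≤ k := by positivity
  have hx : (0 : ℝ) < (k : ℝ) + 1 := by positivity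
  have hp := rf_pos_aux _ r hx (by linarith)
  push_cast
  rw [rf_step_aux _ r hx (by linarith)]
  apply mul_le_of_le_one_right hp.le
  rw [div_le_iff₀ hx]
  linarith

theorem left_focal_green_max (a b : ℤ) (hab : 2 ≤ b - a) (α : ℝ)
    (hα1 : 1 < α) (hα2 : α < 2) :
    (∀ t s : ℤ, a + 1 ≤ t → t ≤ b → a + 2 ≤ s → s ≤ b →
      Gl a b α t s ≤ (b - a - 1 : ℝ) / (α - 1)) ∧
    Gl a b α (a + 1) (a + 2) = (b - a - 1 : ℝ) / (α - 1) := by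
  have habR : (2 : ℝ) ≤ b - a := by exact_mod_cast hab
  have hGα : 0 < Real.Gamma α := Real.Gamma_pos_of_pos (by linarith)
  have hba : 0 < rf (b - a : ℝ) (α - 2) := rf_pos_aux _ _ (by linarith) (by linarith)
  have key : (1 / Real.Gamma α) *
      (rf (b - a - 1 : ℝ) (α - 1) * rf 1 (α - 2) / rf (b - a : ℝ) (α - 2))
      = (b - a - 1 : ℝ) / (α - 1) := by
    have h1 : Real.Gamma α = (α - 1) * Real.Gamma (α - 1) := by
      rw [← Real.Gamma_add_one (by linarith)]; ring_nf
    have h2 : Real.Gamma (b - a : ℝ) = (b - a - 1) * Real.Gamma (b - a - 1 : ℝ) := by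
      rw [← Real.Gamma_add_one (by linarith)]; ring_nf
    have e1 : rf (b - a - 1 : ℝ) (α - 1)
        = Real.Gamma (b - a + (α - 2) : ℝ) / Real.Gamma (b - a - 1 : ℝ) := by
      unfold rf
      rw [if_neg (by linarith)]
      ring_nf
    have e2 : rf 1 (α - 2) = Real.Gamma (α - 1) := by
      unfold rf
      rw [if_neg one_ne_zero, Real.Gamma_one, div_one]
      ring_nf
    have e3 : rf (b - a : ℝ) (α - 2)
        = Real.Gamma (b - a + (α - 2) : ℝ) / ((b - a - 1) * Real.Gamma (b - a - 1 : ℝ)) := by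
      unfold rf
      rw [if_neg (by linarith), h2]
    rw [e1, e2, e3, h1]
    have p1 := (Real.Gamma_pos_of_pos (show (0 : ℝ) < α - 1 by linarith)).ne'
    have p2 := (Real.Gamma_pos_of_pos (show (0 : ℝ) < b - a - 1 by linarith)).ne'
    have p3 := (Real.Gamma_pos_of_pos (show (0 : ℝ) < b - a + (α - 2) by linarith)).ne'
    have p4 : α - 1 ≠ 0 := by linarith
    have p5 : (b - a - 1 : ℝ) ≠ 0 := by linarith
    generalize Real.Gamma (b - a + (α - 2) : ℝ) = X at *
    generalize Real.Gamma (b - a - 1 : ℝ) = Y at *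
    generalize Real.Gamma (α - 1) = Z at *
    generalize (b - a - 1 : ℝ) = W at *
    field_simp
  constructor
  · intro t s ht1 ht2 hs1 hs2
    have main : (1 / Real.Gamma α) *
        (rf (b - s + 1 : ℝ) (α - 1) * rf (t - a : ℝ) (α - 2) / rf (b - a : ℝ) (α - 2))
        ≤ (b - a - 1 : ℝ) / (α - 1) := by
      rw [← key]
      obtain ⟨k, hk⟩ := Int.eq_ofNat_of_zero_le (show 0 ≤ t - a - 1 by omega)
      obtain ⟨m, hm⟩ := Int.eq_ofNat_of_zero_le (show 0 ≤ b - s by omega)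
      obtain ⟨n, hn⟩ := Int.eq_ofNat_of_zero_le (show 0 ≤ b - a - 2 by omega)
      have hkR : (t - a - 1 : ℝ) = k := by exact_mod_cast hk
      have hmR : (b - s : ℝ) = m := by exact_mod_cast hm
      have hnR : (b - a - 2 : ℝ) = n := by exact_mod_cast hn
      have A := rf_mono_aux (α - 1) (by linarith) (show m ≤ n by omega)
      have B := rf_anti_aux (α - 2) (by linarith) (by linarith) (Nat.zero_le k)
      simp only [← hkR, ← hmR, ← hnR, Nat.cast_zero, zero_add] at A B
      rw [show (b - a - 2 + 1 : ℝ) = b - a - 1 by ring] at A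
      rw [show (t - a - 1 + 1 : ℝ) = t - a by ring] at B
      have tR : (1 : ℝ) ≤ t - a := by
        have : (0 : ℝ) ≤ k := by positivity
        linarith
      have C := rf_pos_aux (t - a : ℝ) (α - 2) (by linarith) (by linarith)
      have D := rf_pos_aux (b - a - 1 : ℝ) (α - 1) (by linarith) (by linarith)
      gcongr
    unfold Gl
    split_ifs with h
    · exact main
    · refine le_trans ?_ main
      have hts : (s : ℝ) ≤ t := by
        have : s ≤ t := by omega
        exact_mod_cast this
      have := rf_pos_aux (t - s + 1 : ℝ) (α - 1) (by linarith) (by linarith)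
      gcongr
      linarith
  · unfold Gl
    rw [if_pos (by omega), ← key]
    push_cast
    rw [show (b - (a + 2) + 1 : ℝ) = b - a - 1 by ring, show (a + 1 - a : ℝ) = 1 by ring]
end

section
/- (Nonexistence criterion, right-focal problem) If ∑_{s=a+2}^{b} |q(s)| < Γ(α)/rf(b−a−1, α−1), then the only function u : N[a+1,b] → ℝ satisfying u(t) = ∑_{s=a+2}^{b} G_r(t, s) q(s) u(s) for every t with a+1 ≤ t ≤ b (the Green's-function form of the right-focal fractional boundary value problem ∇_a^α u(t) + q(t)u(t) = 0 for a+2 ≤ t ≤ b, with u(a+1) = 0 and ∇_a^{α−1} u(b) = 0) is the identically zero function. -/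
/-- The right-focal Green's function. -/
noncomputable def Gr (a : ℤ) (α : ℝ) (t s : ℤ) : ℝ :=
  if t ≤ s - 1 then
    (1 / Real.Gamma α) * rf (t - a - 1 : ℝ) (α - 1)
  else
    (1 / Real.Gamma α) * (rf (t - a - 1 : ℝ) (α - 1) - rf (t - s + 1 : ℝ) (α - 1))

lemma rf_nonneg_nat (r : ℝ) (hr : 0 < r) (n : ℕ) : 0 ≤ rf (n : ℝ) r := by
  unfold rf
  split_ifs
  · exact le_rfl
  · exact div_nonneg (Real.Gamma_nonneg_of_nonneg (by positivity))
      (Real.Gamma_nonneg_of_nonneg (by positivity))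

lemma rf_mono_nat (r : ℝ) (hr : 0 < r) : Monotone (fun n : ℕ => rf (n : ℝ) r) := by
  apply monotone_nat_of_le_succ
  intro n
  rcases Nat.eq_zero_or_pos n with h | h
  · subst h
    have h1 := rf_nonneg_nat r hr (0 + 1)
    have h0 : rf ((0 : ℕ) : ℝ) r = 0 := by simp [rf]
    simp only [h0]
    exact h1
  · have hn : (0 : ℝ) < n := by exact_mod_cast h
    have hn1 : ((n + 1 : ℕ) : ℝ) ≠ 0 := by positivity
    simp only [rf, if_neg hn.ne', if_neg hn1]
    push_cast
    have e1 : (n : ℝ) + 1 + r = (n + r) + 1 := by ring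
    rw [e1, Real.Gamma_add_one (by positivity), Real.Gamma_add_one hn.ne']
    have g1 : 0 < Real.Gamma (n : ℝ) := Real.Gamma_pos_of_pos hn
    have g2 : 0 < Real.Gamma ((n : ℝ) + r) := Real.Gamma_pos_of_pos (by positivity)
    rw [div_le_div_iff₀ g1 (by positivity)]
    nlinarith [mul_pos (mul_pos g1 g2) hr]

lemma rf_mono_int (r : ℝ) (hr : 0 < r) (m n : ℤ) (hm : 0 ≤ m) (hmn : m ≤ n) :
    0 ≤ rf (m : ℝ) r ∧ rf (m : ℝ) r ≤ rf (n : ℝ) r := by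
  lift m to ℕ using hm
  lift n to ℕ using (by omega)
  have h := rf_mono_nat r hr (show m ≤ n by exact_mod_cast hmn)
  exact ⟨by simpa using rf_nonneg_nat r hr m, by simpa using h⟩

lemma Gr_bound (a b : ℤ) (α : ℝ) (hα1 : 1 < α) (t s : ℤ) (ht : a + 1 ≤ t) (htb : t ≤ b)
    (hs : a + 2 ≤ s) :
    |Gr a α t s| ≤ (1 / Real.Gamma α) * rf (b - a - 1 : ℝ) (α - 1) := by
  have hg : 0 < 1 / Real.Gamma α := one_div_pos.mpr (Real.Gamma_pos_of_pos (by linarith))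
  have hr : 0 < α - 1 := by linarith
  have h1 := rf_mono_int (α - 1) hr (t - a - 1) (b - a - 1) (by omega) (by omega)
  push_cast at h1
  unfold Gr
  split_ifs with h
  · rw [abs_of_nonneg (mul_nonneg hg.le h1.1)]
    exact mul_le_mul_of_nonneg_left h1.2 hg.le
  · have h2 := rf_mono_int (α - 1) hr (t - s + 1) (t - a - 1) (by omega) (by omega)
    push_cast at h2
    rw [abs_of_nonneg (mul_nonneg hg.le (by linarith [h2.2]))]
    exact mul_le_mul_of_nonneg_left (by linarith [h1.2, h2.1]) hg.le

theorem right_focal_nonexistence (a b : ℤ) (hab : 2 ≤ b - a) (α : ℝ)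
    (hα1 : 1 < α) (hα2 : α < 2) (q : ℤ → ℝ)
    (hq : ∑ s ∈ Finset.Icc (a + 2) b, |q s| < Real.Gamma α / rf (b - a - 1 : ℝ) (α - 1)) :
    ∀ u : ℤ → ℝ,
      (∀ t : ℤ, a + 1 ≤ t → t ≤ b →
        u t = ∑ s ∈ Finset.Icc (a + 2) b, Gr a α t s * q s * u s) →
      ∀ t : ℤ, a + 1 ≤ t → t ≤ b → u t = 0 := by
  intro u hu
  have hΓ : 0 < Real.Gamma α := Real.Gamma_pos_of_pos (by linarith)
  set R := rf (b - a - 1 : ℝ) (α - 1) with hR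
  have hR0 : 0 ≤ R := by
    have h := (rf_mono_int (α - 1) (by linarith) (b - a - 1) (b - a - 1) (by omega) le_rfl).1
    push_cast at h
    exact h
  have hS0 : 0 ≤ ∑ s ∈ Finset.Icc (a + 2) b, |q s| := Finset.sum_nonneg fun _ _ => abs_nonneg _
  have hRpos : 0 < R := by
    rcases hR0.eq_or_lt with h | h
    · rw [← h, div_zero] at hq
      linarith
    · exact h
  obtain ⟨t₀, ht₀, hmax⟩ := Finset.exists_max_image (Finset.Icc (a + 1) b) (fun t => |u t|)
    ⟨b, Finset.mem_Icc.mpr ⟨by omega, le_rfl⟩⟩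
  rw [Finset.mem_Icc] at ht₀
  have hle : |u t₀| ≤ (1 / Real.Gamma α * R) * (∑ s ∈ Finset.Icc (a + 2) b, |q s|) * |u t₀| := by
    conv_lhs => rw [hu t₀ ht₀.1 ht₀.2]
    refine (Finset.abs_sum_le_sum_abs _ _).trans ?_
    rw [Finset.mul_sum, Finset.sum_mul]
    refine Finset.sum_le_sum fun s hs => ?_
    rw [Finset.mem_Icc] at hs
    rw [abs_mul, abs_mul]
    have hG := Gr_bound a b α hα1 t₀ s ht₀.1 ht₀.2 hs.1
    have hm := hmax s (Finset.mem_Icc.mpr ⟨by omega, hs.2⟩)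
    have : 0 ≤ 1 / Real.Gamma α * R := by positivity
    gcongr
  have hlt : (1 / Real.Gamma α * R) * (∑ s ∈ Finset.Icc (a + 2) b, |q s|) < 1 := by
    rw [lt_div_iff₀ hRpos] at hq
    rw [one_div, mul_assoc, inv_mul_lt_iff₀ hΓ]
    linarith
  have hz : |u t₀| = 0 := by
    by_contra hne
    have hp : 0 < |u t₀| := lt_of_le_of_ne (abs_nonneg _) (Ne.symm hne)
    nlinarith
  intro t h1 h2
  have h := hmax t (Finset.mem_Icc.mpr ⟨h1, h2⟩)
  simp only [hz] at h
  exact abs_nonpos_iff.mp h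
end
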